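/- Let b = (b₁,b₂) : ℝ² → ℝ² be a twice continuously differentiable vector field and let ∇⊥ := (∂₂, −∂₁). Then pointwise |∇b|² = |∇·b|² + |∇⊥·b|² + ∇⊥·(b₁∇b₂ − b₂∇b₁). Consequently, for a pair A = (A₁,A₂) of 𝔰𝔬(3)-valued fields on 𝕋² satisfying the zero-curvature relation ∂₁A₂ − ∂₂A₁ + [A₁,A₂] = 0, applying this identity to each matrix component yields pointwise |∇A|² = |∇·A|² + |[A₁,A₂]|² − ∇⊥· Tr(A₁∇A₂ − A₂∇A₁). -/

import Mathlib

open MeasureTheory Filter Set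
open scoped ENNReal NNReal InnerProductSpace Topology

noncomputable section

/-- `ℝ³` as a Euclidean space. -/
abbrev R3 : Type := EuclideanSpace ℝ (Fin 3)

/-- The cross product on `ℝ³`. -/
def cross3 (a b : R3) : R3 :=
  (WithLp.equiv 2 (Fin 3 → ℝ)).symm
    ![(WithLp.equiv 2 (Fin 3 → ℝ) a) 1 * (WithLp.equiv 2 (Fin 3 → ℝ) b) 2 -
        (WithLp.equiv 2 (Fin 3 → ℝ) a) 2 * (WithLp.equiv 2 (Fin 3 → ℝ) b) 1,
      (WithLp.equiv 2 (Fin 3 → ℝ) a) 2 * (WithLp.equiv 2 (Fin 3 → ℝ) b) 0 -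
        (WithLp.equiv 2 (Fin 3 → ℝ) a) 0 * (WithLp.equiv 2 (Fin 3 → ℝ) b) 2,
      (WithLp.equiv 2 (Fin 3 → ℝ) a) 0 * (WithLp.equiv 2 (Fin 3 → ℝ) b) 1 -
        (WithLp.equiv 2 (Fin 3 → ℝ) a) 1 * (WithLp.equiv 2 (Fin 3 → ℝ) b) 0]

/-- Points of the plane; the flat torus `𝕋²` is modeled by `1`-periodic functions on `ℝ²`. -/
abbrev Pt : Type := ℝ × ℝ

/-- A fundamental domain for the torus `𝕋² = ℝ²/ℤ²`. -/
def QT : Set Pt := Set.Icc (0 : ℝ) 1 ×ˢ Set.Icc (0 : ℝ) 1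

/-- The open Euclidean ball `B_r(x) ⊆ ℝ²`. -/
def ball2 (x : Pt) (r : ℝ) : Set Pt := {y : Pt | (y.1 - x.1) ^ 2 + (y.2 - x.2) ^ 2 < r ^ 2}

/-- `1`-periodicity in both variables: such functions are identified with maps on `𝕋²`. -/
def Per {V : Type*} (f : Pt → V) : Prop :=
  ∀ x : Pt, f (x.1 + 1, x.2) = f x ∧ f (x.1, x.2 + 1) = f x

/-- The standard basis directions of `ℝ²`. -/
def e2 : Fin 2 → Pt := ![((1 : ℝ), (0 : ℝ)), ((0 : ℝ), (1 : ℝ))]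

variable {V : Type*} [NormedAddCommGroup V] [NormedSpace ℝ V]

/-- The partial derivative `∂ᵢ f`. -/
def pd (i : Fin 2) (f : Pt → V) : Pt → V := fun x => fderiv ℝ f x (e2 i)

/-- The Laplacian `Δ f = ∂₁∂₁ f + ∂₂∂₂ f`. -/
def lap (f : Pt → V) : Pt → V := fun x => pd 0 (pd 0 f) x + pd 1 (pd 1 f) x

/-- Time derivative `∂ₜ u` of a time dependent field. -/
def tderiv (u : ℝ → Pt → V) : ℝ → Pt → V := fun t x => deriv (fun s => u s x) t

/-- The squared `L²`-norm over a subset `s` of the plane. -/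
def L2SqOn (s : Set Pt) (f : Pt → V) : ℝ := ∫ x in s, ‖f x‖ ^ 2

/-- The squared `L²(𝕋²)`-norm. -/
def L2Sq (f : Pt → V) : ℝ := L2SqOn QT f

/-- The `L²(𝕋²)`-norm. -/
def L2Norm (f : Pt → V) : ℝ := Real.sqrt (L2Sq f)

/-- The sup-norm over a subset of the plane. -/
def LinfOn (s : Set Pt) (f : Pt → V) : ℝ := ⨆ x ∈ s, ‖f x‖

/-- The squared Sobolev `H^k(𝕋²)`-norm. -/
def HkSq (k : ℕ) (f : Pt → V) : ℝ :=
  ∑ j ∈ Finset.range (k + 1), ∫ x in QT, ‖iteratedFDeriv ℝ j f x‖ ^ 2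

/-- The Sobolev `H^k(𝕋²)`-norm. -/
def HkNorm (k : ℕ) (f : Pt → V) : ℝ := Real.sqrt (HkSq k f)

/-- Membership in the Sobolev space `H^k(𝕋²; V)` (modeled via classical derivatives). -/
def MemHk (k : ℕ) (f : Pt → V) : Prop :=
  Per f ∧ ∀ j ∈ Finset.range (k + 1),
    Integrable (fun x => ‖iteratedFDeriv ℝ j f x‖ ^ 2) (volume.restrict QT)

/-- `|∇f|²` pointwise. -/
def gradNormSq (f : Pt → R3) (x : Pt) : ℝ := ‖pd 0 f x‖ ^ 2 + ‖pd 1 f x‖ ^ 2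

/-- The local Dirichlet integral `∫_s |∇f|²`. -/
def dirichOn (s : Set Pt) (f : Pt → R3) : ℝ := ∫ x in s, gradNormSq f x

/-- The Dirichlet integral `∫_{𝕋²} |∇f|²` (twice the Dirichlet energy). -/
def dirich (f : Pt → R3) : ℝ := dirichOn QT f

/-- `3 × 3` matrices, realized as continuous linear maps of `ℝ³`. -/
abbrev M3 : Type := R3 →L[ℝ] R3

/-- The divergence `∇ ⬝ a = ∂₁ a₁ + ∂₂ a₂` of a matrix-valued field `a : 𝕋² → ℝ² ⊗ ℝ^{3×3}`. -/
def divG (a : Pt → Fin 2 → M3) : Pt → M3 := fun x =>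
  fderiv ℝ (fun y => a y 0) x (e2 0) + fderiv ℝ (fun y => a y 1) x (e2 1)

/-- `a² = a₁² + a₂²`. -/
def sqG (a : Pt → Fin 2 → M3) : Pt → M3 := fun x =>
  (a x 0).comp (a x 0) + (a x 1).comp (a x 1)

/-- `a·∇v + (∇·a) v + a² v`. -/
def gaugeOp (a : Pt → Fin 2 → M3) (v : Pt → R3) : Pt → R3 := fun x =>
  a x 0 (pd 0 v x) + a x 1 (pd 1 v x) + divG a x (v x) + sqG a x (v x)

/-- The squared covariant gradient `|∇_a v|² = |∇v + a v|²` pointwise. -/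
def covGradSq (a : Pt → Fin 2 → M3) (v : Pt → R3) (x : Pt) : ℝ :=
  ‖pd 0 v x + a x 0 (v x)‖ ^ 2 + ‖pd 1 v x + a x 1 (v x)‖ ^ 2

/-- The covariant Laplacian `Δ_a v = Δ v + a·∇v + (∇·a) v + a² v`. -/
def covLap (a : Pt → Fin 2 → M3) (v : Pt → R3) : Pt → R3 := fun x =>
  lap v x + gaugeOp a v x

/-- The perturbation `F(t,a,v)` of the Landau–Lifshitz terms arising from the gauge `a`. -/
def Fpert (α : ℝ) (a : Pt → Fin 2 → M3) (v : Pt → R3) : Pt → R3 := fun x =>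
  α • gaugeOp a v x
    + α • ((‖a x 0 (v x)‖ ^ 2 + ‖a x 1 (v x)‖ ^ 2) • v x
        + (2 * (⟪pd 0 v x, a x 0 (v x)⟫_ℝ + ⟪pd 1 v x, a x 1 (v x)⟫_ℝ)) • v x)
    - cross3 (v x) (gaugeOp a v x)

/-- `H(t,a,v) = α(Δv + |∇v|² v) − v × Δv + F(t,a,v)`, the right-hand side of the
gauged Landau–Lifshitz–Gilbert equation. -/
def Hfun (α : ℝ) (a : Pt → Fin 2 → M3) (v : Pt → R3) : Pt → R3 := fun x =>
  α • (lap v x + gradNormSq v x • v x) - cross3 (v x) (lap v x) + Fpert α a v x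

/-- The gauged (transformed) Landau–Lifshitz–Gilbert equation
`∂ₜ u = α(Δ_A u + |∇_A u|² u) − u × Δ_A u` at `(t,x)`. -/
def GaugedLLG (α : ℝ) (A : ℝ → Pt → Fin 2 → M3) (u : ℝ → Pt → R3) (t : ℝ) (x : Pt) : Prop :=
  tderiv u t x =
    α • (covLap (A t) (u t) x + covGradSq (A t) (u t) x • u t x)
      - cross3 (u t x) (covLap (A t) (u t) x)

/-- The `L²(𝕋²)` pairing. -/
def pairing (f g : Pt → R3) : ℝ := ∫ x in QT, ⟪f x, g x⟫_ℝ

/-- The `H¹(𝕋²)` inner product. -/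
def H1inner (f g : Pt → R3) : ℝ :=
  pairing f g + ∑ i : Fin 2, ∫ x in QT, ⟪pd i f x, pd i g x⟫_ℝ

/-- Continuity in `L²(𝕋²)` on a time set. -/
def ContL2On (u : ℝ → Pt → R3) (s : Set ℝ) : Prop :=
  ∀ t ∈ s, Tendsto (fun r => L2Sq (fun x => u r x - u t x)) (nhdsWithin t s) (nhds 0)

/-- Continuity in `H^k(𝕋²)` on a time set. -/
def ContHkOn (k : ℕ) (u : ℝ → Pt → V) (s : Set ℝ) : Prop :=
  ∀ t ∈ s, Tendsto (fun r => HkSq k (fun x => u r x - u t x)) (nhdsWithin t s) (nhds 0)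

/-- `γ`-Hölder continuity with constant `C` as a map `[0,T] → H¹`, for a gauge field. -/
def HolderE (γ T C : ℝ) (a : ℝ → Pt → Fin 2 → M3) : Prop :=
  ∀ s ∈ Set.Icc (0 : ℝ) T, ∀ t ∈ Set.Icc (0 : ℝ) T,
    HkNorm 1 (fun x => a s x - a t x) ≤ C * |s - t| ^ γ

/-- The norm of the parameter space `𝓔 = C^γ([0,T]; H¹(𝕋²; ℝ²⊗𝔰𝔬(3)))`. -/
def EHolNorm (γ T : ℝ) (a : ℝ → Pt → Fin 2 → M3) : ℝ :=
  (⨆ t ∈ Set.Icc (0 : ℝ) T, HkNorm 1 (a t)) + sInf {C : ℝ | 0 ≤ C ∧ HolderE γ T C a}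

/-- Membership in the parameter space `𝓔 = C^γ([0,T]; H¹(𝕋²; ℝ²⊗𝔰𝔬(3)))`. -/
def MemE (γ T : ℝ) (a : ℝ → Pt → Fin 2 → M3) : Prop :=
  (∀ t ∈ Set.Icc (0 : ℝ) T, MemHk 1 (a t)) ∧ ∃ C, 0 ≤ C ∧ HolderE γ T C a

/-- `⟨∇f, a g⟩` pointwise. -/
def innAV (a : Pt → Fin 2 → M3) (f g : Pt → R3) (x : Pt) : ℝ :=
  ⟪pd 0 f x, a x 0 (g x)⟫_ℝ + ⟪pd 1 f x, a x 1 (g x)⟫_ℝ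

/-- The Fréchet derivative `F_v(t,a,v)φ` of `F` in `v`. -/
def FpertD (α : ℝ) (a : Pt → Fin 2 → M3) (v φ : Pt → R3) : Pt → R3 := fun x =>
  α • gaugeOp a φ x
    + α • ((2 * (⟪a x 0 (v x), a x 0 (φ x)⟫_ℝ + ⟪a x 1 (v x), a x 1 (φ x)⟫_ℝ)) • v x
        + (‖a x 0 (v x)‖ ^ 2 + ‖a x 1 (v x)‖ ^ 2) • φ x
        + (2 * innAV a φ v x) • v x + (2 * innAV a v φ x) • v x
        + (2 * innAV a v v x) • φ x)
    - cross3 (φ x) (gaugeOp a v x) - cross3 (v x) (gaugeOp a φ x)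

/-- The Fréchet derivative `H_v(t,a,v)φ` of `H` in `v`. -/
def HvD (α : ℝ) (a : Pt → Fin 2 → M3) (v φ : Pt → R3) : Pt → R3 := fun x =>
  α • lap φ x - cross3 (v x) (lap φ x) - cross3 (φ x) (lap v x)
    + α • (gradNormSq v x • φ x
        + (2 * (⟪pd 0 v x, pd 0 φ x⟫_ℝ + ⟪pd 1 v x, pd 1 φ x⟫_ℝ)) • v x)
    + FpertD α a v φ x

/-- Derivative of `a ↦ a·∇v + (∇·a)v + a²v` in direction `b`. -/
def gaugeOpMixed (a b : Pt → Fin 2 → M3) (v : Pt → R3) : Pt → R3 := fun x =>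
  b x 0 (pd 0 v x) + b x 1 (pd 1 v x) + divG b x (v x)
    + a x 0 (b x 0 (v x)) + b x 0 (a x 0 (v x))
    + a x 1 (b x 1 (v x)) + b x 1 (a x 1 (v x))

/-- The Fréchet derivative `H_a(t,a,v) b = F_a(t,a,v) b` of `H` in the parameter `a`,
evaluated on the direction `b` (both at the given time). -/
def HaD (α : ℝ) (a b : Pt → Fin 2 → M3) (v : Pt → R3) : Pt → R3 := fun x =>
  α • gaugeOpMixed a b v x
    + α • ((2 * (⟪a x 0 (v x), b x 0 (v x)⟫_ℝ + ⟪a x 1 (v x), b x 1 (v x)⟫_ℝ)) • v x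
        + (2 * innAV b v v x) • v x)
    - cross3 (v x) (gaugeOpMixed a b v x)

/-- A matrix is skew-symmetric, i.e. belongs to `𝔰𝔬(3)`. -/
def SkewM (M : M3) : Prop := ContinuousLinearMap.adjoint M = -M

/-- The zero-curvature (pure gauge) relation `∂₁A₂ − ∂₂A₁ + [A₁,A₂] = 0`. -/
def ZeroCurv (a : Pt → Fin 2 → M3) : Prop :=
  ∀ x : Pt,
    fderiv ℝ (fun y => a y 1) x (e2 0) - fderiv ℝ (fun y => a y 0) x (e2 1)
      + ((a x 0).comp (a x 1) - (a x 1).comp (a x 0)) = 0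

/-- The distributional product `m × Δm := ∇·(m × ∇m)`. -/
def mLap (m : Pt → R3) : Pt → R3 := fun x =>
  pd 0 (fun y => cross3 (m y) (pd 0 m y)) x + pd 1 (fun y => cross3 (m y) (pd 1 m y)) x

/-- Test functions: smooth and periodic, i.e. `C^∞(𝕋²; ℝ³)`. -/
def TestFn (ψ : Pt → R3) : Prop := (∀ n : ℕ, ContDiff ℝ n ψ) ∧ Per ψ

/-- Càdlàg (right-continuous with left limits) on `[a,b]`. -/
def CadlagOn (f : ℝ → ℝ) (a b : ℝ) : Prop :=
  (∀ t ∈ Set.Ico a b, Tendsto f (nhdsWithin t (Set.Ioi t)) (nhds (f t))) ∧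
  (∀ t ∈ Set.Ioc a b, ∃ L, Tendsto f (nhdsWithin t (Set.Iio t)) (nhds L))

/-- The matrix of the linear map `v ↦ v × w`, as a continuous linear map on `ℝ³`. -/
def crossCLM (w : R3) : M3 :=
  LinearMap.toContinuousLinearMap <| Matrix.toEuclideanLin <| Matrix.of
    ![![0, (WithLp.equiv 2 (Fin 3 → ℝ) w) 2, -(WithLp.equiv 2 (Fin 3 → ℝ) w) 1],
      ![-(WithLp.equiv 2 (Fin 3 → ℝ) w) 2, 0, (WithLp.equiv 2 (Fin 3 → ℝ) w) 0],
      ![(WithLp.equiv 2 (Fin 3 → ℝ) w) 1, -(WithLp.equiv 2 (Fin 3 → ℝ) w) 0, 0]]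

/-- A local `ℍ²`-solution of the parametrized equation `∂ₜ φ = H(t,z,φ)` on the time set
`s`, with initial data `u₀` at time `t₀`. -/
def IsLocalSolOn (α : ℝ) (z : ℝ → Pt → Fin 2 → M3) (u₀ : Pt → R3) (t₀ : ℝ)
    (u : ℝ → Pt → R3) (s : Set ℝ) : Prop :=
  u t₀ = u₀ ∧ (∀ t ∈ s, MemHk 2 (u t)) ∧ ContHkOn 2 u s ∧
    ∀ t ∈ s, t₀ < t → ∀ x, tderiv u t x = Hfun α (z t) (u t) x

/-- `(u, τ)` is an `ℍ²`-maximal solution of `∂ₜ φ = H(t,z,φ)`, `φ(t₀) = u₀`, on `[t₀,T]`: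
either `τ = T` and `u` solves the equation on all of `[t₀,T]`, or `τ ∈ (t₀,T]`, `u` solves
it on `[t₀,τ)` and admits no continuable extension in `ℍ²`. -/
def IsMaxSol (α : ℝ) (z : ℝ → Pt → Fin 2 → M3) (u₀ : Pt → R3) (t₀ T : ℝ)
    (u : ℝ → Pt → R3) (τ : ℝ) : Prop :=
  (τ = T ∧ IsLocalSolOn α z u₀ t₀ u (Set.Icc t₀ T)) ∨
  (t₀ < τ ∧ τ ≤ T ∧ IsLocalSolOn α z u₀ t₀ u (Set.Ico t₀ τ) ∧
    ¬ ∃ (τ' : ℝ) (u' : ℝ → Pt → R3), τ < τ' ∧ τ' ≤ T ∧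
      IsLocalSolOn α z u₀ t₀ u' (Set.Ico t₀ τ') ∧ ∀ t ∈ Set.Ico t₀ τ, u' t = u t)

end
noncomputable section

/-- The `(j,k)` entry of a matrix `M ∈ ℝ^{3×3}`. -/
def entM (M : M3) (j k : Fin 3) : ℝ := ⟪M (EuclideanSpace.single k 1), EuclideanSpace.single j 1⟫_ℝ

lemma aux_pd_contDiff {f : Pt → ℝ} (hf : ContDiff ℝ 2 f) (i : Fin 2) : ContDiff ℝ 1 (pd i f) := by
  have h : ContDiff ℝ 1 (fderiv ℝ f) := hf.fderiv_right (by norm_num)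
  exact h.clm_apply contDiff_const

lemma aux_pd_comm {f : Pt → ℝ} (hf : ContDiff ℝ 2 f) (x : Pt) :
    pd 1 (pd 0 f) x = pd 0 (pd 1 f) x := by
  have h : ContDiff ℝ 1 (fderiv ℝ f) := hf.fderiv_right (by norm_num)
  have hd : DifferentiableAt ℝ (fderiv ℝ f) x := (h.differentiable (by norm_num)) x
  have hs : IsSymmSndFDerivAt ℝ f x :=
    hf.contDiffAt.isSymmSndFDerivAt (by simp)
  have key : ∀ i j : Fin 2, pd i (pd j f) x = fderiv ℝ (fderiv ℝ f) x (e2 i) (e2 j) := by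
    intro i j
    have := (hd.hasFDerivAt.clm_apply (hasFDerivAt_const (e2 j) x)).fderiv
    change fderiv ℝ (fun y => fderiv ℝ f y (e2 j)) x (e2 i) = _
    rw [this]
    simp
  rw [key, key]
  exact hs _ _

lemma aux_pd_mul {f g : Pt → ℝ} (i : Fin 2) (x : Pt) (hf : DifferentiableAt ℝ f x)
    (hg : DifferentiableAt ℝ g x) :
    pd i (fun y => f y * g y) x = f x * pd i g x + pd i f x * g x := by
  unfold pd
  rw [fderiv_fun_mul hf hg]
  simp [mul_comm]

lemma aux_pd_sub {f g : Pt → ℝ} (i : Fin 2) (x : Pt) (hf : DifferentiableAt ℝ f x)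
    (hg : DifferentiableAt ℝ g x) :
    pd i (fun y => f y - g y) x = pd i f x - pd i g x := by
  unfold pd
  rw [fderiv_fun_sub hf hg]
  simp

lemma aux_key {f g : Pt → ℝ} (hf : ContDiff ℝ 2 f) (hg : ContDiff ℝ 2 g) (x : Pt) :
    pd 1 (fun y => f y * pd 0 g y - g y * pd 0 f y) x -
      pd 0 (fun y => f y * pd 1 g y - g y * pd 1 f y) x =
    2 * (pd 1 f x * pd 0 g x - pd 0 f x * pd 1 g x) := by
  have df : DifferentiableAt ℝ f x := hf.differentiable (by norm_num) x
  have dg : DifferentiableAt ℝ g x := hg.differentiable (by norm_num) x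
  have dpf : ∀ i, DifferentiableAt ℝ (pd i f) x := fun i =>
    (aux_pd_contDiff hf i).differentiable (by norm_num) x
  have dpg : ∀ i, DifferentiableAt ℝ (pd i g) x := fun i =>
    (aux_pd_contDiff hg i).differentiable (by norm_num) x
  rw [aux_pd_sub 1 x (df.fun_mul (dpg 0)) (dg.fun_mul (dpf 0)),
    aux_pd_sub 0 x (df.fun_mul (dpg 1)) (dg.fun_mul (dpf 1)),
    aux_pd_mul 1 x df (dpg 0), aux_pd_mul 1 x dg (dpf 0),
    aux_pd_mul 0 x df (dpg 1), aux_pd_mul 0 x dg (dpf 1),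
    aux_pd_comm hf, aux_pd_comm hg]
  ring

/-- The entry functional as a continuous linear map. -/
def entL (j k : Fin 3) : M3 →L[ℝ] ℝ :=
  (innerSL ℝ (EuclideanSpace.single j (1 : ℝ) : R3)).comp
    (ContinuousLinearMap.apply ℝ R3 (EuclideanSpace.single k (1 : ℝ) : R3))

lemma entL_apply (M : M3) (j k : Fin 3) : entM M j k = entL j k M := by
  simp only [entM, entL, ContinuousLinearMap.comp_apply, innerSL_apply_apply,
    ContinuousLinearMap.apply_apply]
  exact real_inner_comm _ _

lemma entM_skew {M : M3} (h : SkewM M) (j k : Fin 3) : entM M k j = -entM M j k := by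
  unfold entM
  have h1 : (-M) (EuclideanSpace.single k (1 : ℝ)) =
      ContinuousLinearMap.adjoint M (EuclideanSpace.single k (1 : ℝ)) := by rw [h]
  rw [← ContinuousLinearMap.adjoint_inner_right, ← h1, real_inner_comm]
  simp

lemma pd_entM {a : Pt → M3} (x : Pt) (ha : DifferentiableAt ℝ a x) (i : Fin 2) (j k : Fin 3) :
    pd i (fun y => entM (a y) j k) x = entM (fderiv ℝ a x (e2 i)) j k := by
  simp only [entL_apply, pd]
  rw [show (fun y => entL j k (a y)) = (entL j k) ∘ a from rfl,
    ((entL j k).hasFDerivAt.comp x ha.hasFDerivAt).fderiv]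
  rfl

lemma aux_pd_sum {ι : Type*} (s : Finset ι) {f : ι → Pt → ℝ} (i : Fin 2) (x : Pt)
    (hf : ∀ j ∈ s, DifferentiableAt ℝ (f j) x) :
    pd i (fun y => ∑ j ∈ s, f j y) x = ∑ j ∈ s, pd i (f j) x := by
  unfold pd
  rw [fderiv_fun_sum hf]
  simp

lemma aux_pd_neg {f : Pt → ℝ} (i : Fin 2) (x : Pt) :
    pd i (fun y => - f y) x = - pd i f x := by
  unfold pd
  rw [fderiv_fun_neg]
  simp

/-- **Div–curl decomposition of the gradient, and its consequence for pure gauges.**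
(1) For a `C²` vector field `b = (b₁,b₂)` on `ℝ²`, pointwise
`|∇b|² = |∇·b|² + |∇⊥·b|² + ∇⊥·(b₁∇b₂ − b₂∇b₁)`, where `∇⊥ = (∂₂, −∂₁)`.
(2) Consequently, for a pair `A = (A₁,A₂)` of `𝔰𝔬(3)`-valued fields on `𝕋²` with zero
curvature `∂₁A₂ − ∂₂A₁ + [A₁,A₂] = 0`, applying (1) to each matrix component gives
`|∇A|² = |∇·A|² + |[A₁,A₂]|² − ∇⊥· Tr(A₁∇A₂ − A₂∇A₁)` pointwise. -/
theorem div_curl_identity :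
    (∀ b : Pt → ℝ × ℝ, ContDiff ℝ 2 b → ∀ x : Pt,
      (∑ i : Fin 2, ((pd i (fun y => (b y).1) x) ^ 2 + (pd i (fun y => (b y).2) x) ^ 2)) =
        (pd 0 (fun y => (b y).1) x + pd 1 (fun y => (b y).2) x) ^ 2 +
        (pd 1 (fun y => (b y).1) x - pd 0 (fun y => (b y).2) x) ^ 2 +
        (pd 1 (fun y => (b y).1 * pd 0 (fun z => (b z).2) y -
            (b y).2 * pd 0 (fun z => (b z).1) y) x -
          pd 0 (fun y => (b y).1 * pd 1 (fun z => (b z).2) y -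
            (b y).2 * pd 1 (fun z => (b z).1) y) x)) ∧
    (∀ A : Pt → Fin 2 → M3, ContDiff ℝ 2 A → Per A →
      (∀ x i, SkewM (A x i)) → ZeroCurv A → ∀ x : Pt,
      (∑ j : Fin 3, ∑ k : Fin 3, ∑ i : Fin 2, ∑ l : Fin 2,
          (pd l (fun y => entM (A y i) j k) x) ^ 2) =
        (∑ j : Fin 3, ∑ k : Fin 3,
          (pd 0 (fun y => entM (A y 0) j k) x + pd 1 (fun y => entM (A y 1) j k) x) ^ 2) +
        (∑ j : Fin 3, ∑ k : Fin 3,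
          (entM ((A x 0).comp (A x 1) - (A x 1).comp (A x 0)) j k) ^ 2) -
        (pd 1 (fun y => ∑ j : Fin 3, ∑ k : Fin 3,
            (entM (A y 0) j k * pd 0 (fun z => entM (A z 1) k j) y -
              entM (A y 1) j k * pd 0 (fun z => entM (A z 0) k j) y)) x -
          pd 0 (fun y => ∑ j : Fin 3, ∑ k : Fin 3,
            (entM (A y 0) j k * pd 1 (fun z => entM (A z 1) k j) y -
              entM (A y 1) j k * pd 1 (fun z => entM (A z 0) k j) y)) x)) := by
  refine ⟨?_, ?_⟩
  · intro b hb x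
    rw [aux_key hb.fst hb.snd x, Fin.sum_univ_two]
    ring
  · intro A hA _ hskew hcurv x
    have hAi : ∀ i, ContDiff ℝ 2 (fun y => A y i) := fun i => contDiff_pi.1 hA i
    have dA : ∀ i, DifferentiableAt ℝ (fun y => A y i) x := fun i =>
      (hAi i).differentiable (by norm_num) x
    have hE : ∀ i j k, ContDiff ℝ 2 (fun y => entM (A y i) j k) := by
      intro i j k
      simp only [entL_apply]
      exact (entL j k).contDiff.comp (hAi i)
    have dE : ∀ i j k, DifferentiableAt ℝ (fun y => entM (A y i) j k) x := fun i j k =>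
      (hE i j k).differentiable (by norm_num) x
    have dpE : ∀ l i j k, DifferentiableAt ℝ (pd l (fun y => entM (A y i) j k)) x :=
      fun l i j k => (aux_pd_contDiff (hE i j k) l).differentiable (by norm_num) x
    have hsk : ∀ i j k, (fun y => entM (A y i) k j) = fun y => -entM (A y i) j k :=
      fun i j k => funext fun y => entM_skew (hskew y i) j k
    have hsum : ∀ m l : Fin 2, pd m (fun y => ∑ j : Fin 3, ∑ k : Fin 3,
            (entM (A y 0) j k * pd l (fun z => entM (A z 1) k j) y -
              entM (A y 1) j k * pd l (fun z => entM (A z 0) k j) y)) x =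
        ∑ j : Fin 3, ∑ k : Fin 3, -pd m (fun y =>
            (entM (A y 0) j k * pd l (fun z => entM (A z 1) j k) y -
              entM (A y 1) j k * pd l (fun z => entM (A z 0) j k) y)) x := by
      intro m l
      have hd : ∀ j k : Fin 3, DifferentiableAt ℝ (fun y =>
            (entM (A y 0) j k * pd l (fun z => entM (A z 1) k j) y -
              entM (A y 1) j k * pd l (fun z => entM (A z 0) k j) y)) x := fun j k =>
        ((dE 0 j k).fun_mul (dpE l 1 k j)).fun_sub ((dE 1 j k).fun_mul (dpE l 0 k j))
      rw [aux_pd_sum _ _ _ (fun j _ => DifferentiableAt.fun_sum (fun k _ => hd j k))]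
      refine Finset.sum_congr rfl fun j _ => ?_
      rw [aux_pd_sum _ _ _ (fun k _ => hd j k)]
      refine Finset.sum_congr rfl fun k _ => ?_
      rw [← aux_pd_neg]
      congr 1
      funext y
      rw [hsk 1 j k, hsk 0 j k, aux_pd_neg, aux_pd_neg]
      ring
    have hc : ∀ j k, entM ((A x 0).comp (A x 1) - (A x 1).comp (A x 0)) j k =
        pd 1 (fun y => entM (A y 0) j k) x - pd 0 (fun y => entM (A y 1) j k) x := by
      intro j k
      rw [pd_entM x (dA 0), pd_entM x (dA 1), entL_apply, entL_apply, entL_apply, ← map_sub]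
      congr 1
      have := hcurv x
      rw [← sub_eq_zero, ← this]
      abel
    rw [hsum, hsum]
    simp only [hc]
    simp only [← Finset.sum_add_distrib, ← Finset.sum_sub_distrib]
    refine Finset.sum_congr rfl fun j _ => Finset.sum_congr rfl fun k _ => ?_
    have := aux_key (hE 0 j k) (hE 1 j k) x
    simp only [Fin.sum_univ_two]
    linear_combination -this


end
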